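/- Let l, l_D, n be positive integers with n · 2^{2·l_D} < 2^l, and let p, q : {1,…,n} → ℕ be coordinate vectors with p_i ≤ 2^{l_D} and q_i ≤ 2^{l_D} for all i. Then the element of Z_{2^l} obtained by computing Σ_{i=1}^{n} ((p_i)² + (q_i)² − 2·p_i·q_i) with all coordinates cast into Z_{2^l} is the residue class whose canonical representative in {0,…,2^l − 1} equals the true squared Euclidean distance Σ_{i=1}^{n} (p_i − q_i)² (computed in ℤ). That is, under these bounds no modular wraparound occurs and the secure distance computation over Z_{2^l} is exact. -/

import Mathlib

/-!
The modular sum is the image in `ZMod (2 ^ l)` of the integer `D = ∑ (p i - q i) ^ 2`. The bounds on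
the coordinates give `0 ≤ (p i - q i) ^ 2 ≤ 2 ^ (2 * lD)`, hence `0 ≤ D ≤ n * 2 ^ (2 * lD) < 2 ^ l`,
so `D` is its own residue modulo `2 ^ l` (`ZMod.val_intCast`, `Int.emod_eq_of_lt`).
-/

/-- Exactness of the secure distance computation over Z_{2^l}:
if `n · 2^{2·l_D} < 2^l` and all coordinates are bounded by `2^{l_D}`, then the
element of `Z_{2^l}` computed as `Σ (p_i² + q_i² − 2·p_i·q_i)` (coordinates cast
into `Z_{2^l}`) has canonical representative equal to the true squared
Euclidean distance `Σ (p_i − q_i)²` computed in ℤ: no wraparound occurs. -/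
theorem secure_distance_exact (l lD n : ℕ) (hl : 0 < l) (hlD : 0 < lD) (hn : 0 < n)
    (hbound : n * 2 ^ (2 * lD) < 2 ^ l)
    (p q : Fin n → ℕ) (hp : ∀ i, p i ≤ 2 ^ lD) (hq : ∀ i, q i ≤ 2 ^ lD) :
    ((∑ i, (((p i : ZMod (2 ^ l)) ^ 2 + (q i : ZMod (2 ^ l)) ^ 2
        - 2 * (p i : ZMod (2 ^ l)) * (q i : ZMod (2 ^ l))))).val : ℤ) =
      ∑ i, ((p i : ℤ) - (q i : ℤ)) ^ 2 := by
  have hterm : ∀ i, ((p i : ℤ) - (q i : ℤ)) ^ 2 ≤ 2 ^ (2 * lD) := by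
    intro i
    have h1 : (p i : ℤ) ≤ 2 ^ lD := by exact_mod_cast hp i
    have h2 : (q i : ℤ) ≤ 2 ^ lD := by exact_mod_cast hq i
    rw [mul_comm, pow_mul]
    exact sq_le_sq' (by linarith [Int.natCast_nonneg (p i)])
      (by linarith [Int.natCast_nonneg (q i)])
  have hlt : ∑ i, ((p i : ℤ) - (q i : ℤ)) ^ 2 < 2 ^ l := by
    calc ∑ i, ((p i : ℤ) - (q i : ℤ)) ^ 2
        ≤ ∑ _i : Fin n, (2 : ℤ) ^ (2 * lD) := Finset.sum_le_sum fun i _ => hterm i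
      _ = (n : ℤ) * 2 ^ (2 * lD) := by simp
      _ < 2 ^ l := by exact_mod_cast hbound
  have hcast : ∑ i, ((p i : ZMod (2 ^ l)) ^ 2 + (q i : ZMod (2 ^ l)) ^ 2
        - 2 * (p i : ZMod (2 ^ l)) * (q i : ZMod (2 ^ l))) =
      ((∑ i, ((p i : ℤ) - (q i : ℤ)) ^ 2 : ℤ) : ZMod (2 ^ l)) := by
    rw [Int.cast_sum]
    refine Finset.sum_congr rfl fun i _ => ?_
    simp only [Int.cast_pow, Int.cast_sub, Int.cast_natCast]
    ring
  rw [hcast, ZMod.val_intCast]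
  exact Int.emod_eq_of_lt (Finset.sum_nonneg fun i _ => sq_nonneg _) (by exact_mod_cast hlt)
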